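/- Let n ≥ 1 and let K : ℝ^{n+1} → ℝ be an odd Calderón–Zygmund kernel of homogeneity −n: K(x) = Ω(x)/|x|^n with Ω homogeneous of degree 0, K of class C² on ℝ^{n+1}∖{0} and |∇^j K(x)| ≤ C/|x|^{n+j} for j = 0,1,2 and x ≠ 0. Let A : ℝ^n → ℝ be a C¹ function with ‖∇A‖_∞ ≤ 1/10, let Γ = {(z, A(z)) : z ∈ ℝ^n} ⊂ ℝ^{n+1}, let μ = H^n|_Γ, and for x ∈ Γ let N_x denote a unit normal to Γ at x. Let g : ℝ^{n+1} → ℝ be a C¹ function with compact support, and fix a ∈ (0,1) and b ∈ (0,a). Then for every x ∈ Γ, lim_{X_a(x,N_x) ∋ y → x} ½(T_{b|x−y|}(gμ)(y) − T_{b|x−y|}(gμ)(2x−y)) = C_K(N_x) g(x), where C_K(N) = ∫_{L(N)} (Ω(y+N) − Ω(y−N))/(2(|y|² + 1)^{n/2}) dH^n(y) and L(N) is the hyperplane through the origin orthogonal to N. -/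

import Mathlib

open MeasureTheory Metric Filter Set
open scoped ENNReal NNReal Topology RealInnerProductSpace

noncomputable section

/-- The one-sided open cone `X_a(x,u)` with vertex `x`, axis `u` and aperture `a`. -/
def cone {n : ℕ} (a : ℝ) (x u : EuclideanSpace ℝ (Fin (n + 1))) :
    Set (EuclideanSpace ℝ (Fin (n + 1))) :=
  {y | a * ‖y - x‖ < ⟪y - x, u⟫}

/-- The truncated singular integral of the measure `g μ`:
`T_ε(gμ)(y) = ∫_{|y-z|>ε} K(y-z) g(z) dμ(z)`. -/
def TepsDen {n : ℕ} (K : EuclideanSpace ℝ (Fin (n + 1)) → ℝ)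
    (μ : Measure (EuclideanSpace ℝ (Fin (n + 1))))
    (g : EuclideanSpace ℝ (Fin (n + 1)) → ℝ) (ε : ℝ)
    (y : EuclideanSpace ℝ (Fin (n + 1))) : ℝ :=
  ∫ z, (if ε < dist y z then K (y - z) * g z else 0) ∂μ

/-- The map `z ↦ (z, A z)` parametrizing the graph of `A : ℝⁿ → ℝ`. -/
def graphMap {n : ℕ} (A : EuclideanSpace ℝ (Fin n) → ℝ) (z : EuclideanSpace ℝ (Fin n)) :
    EuclideanSpace ℝ (Fin (n + 1)) :=
  WithLp.toLp 2 (Fin.snoc (α := fun _ => ℝ) z.ofLp (A z))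

/-- The constant `C_K(N)` appearing in the jump formulas: an integral over the
hyperplane through the origin orthogonal to `N`. -/
def CK (n : ℕ) (Ω : EuclideanSpace ℝ (Fin (n + 1)) → ℝ)
    (N : EuclideanSpace ℝ (Fin (n + 1))) : ℝ :=
  ∫ y in {y : EuclideanSpace ℝ (Fin (n + 1)) | ⟪y, N⟫ = 0},
    (Ω (y + N) - Ω (y - N)) / (2 * (‖y‖ ^ 2 + 1) ^ ((n : ℝ) / 2)) ∂μH[n]

section aux

variable {E V : Type*} [NormedAddCommGroup E] [InnerProductSpace ℝ E] [FiniteDimensional ℝ E]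
  [MeasurableSpace E] [BorelSpace E]
  [NormedAddCommGroup V] [InnerProductSpace ℝ V]

lemma aux_int (n : ℕ) (hE : Module.finrank ℝ E = n) (lam : Measure E) [lam.IsAddHaarMeasure] (c : ℝ) :
    Integrable (fun k : E => c / (1 + ‖k‖) ^ (n + 1)) lam := by
  have h := integrable_one_add_norm (E := E) (μ := lam) (r := (n + 1 : ℕ)) (by rw [hE]; push_cast; linarith)
  refine (h.const_mul c).congr (ae_of_all _ fun k => ?_)
  have : (0:ℝ) ≤ 1 + ‖k‖ := by positivity
  simp only [Real.rpow_neg this, Real.rpow_natCast]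
  rfl

/-- Zero integral of the difference of a translate. -/
lemma aux_translate (n : ℕ) (hE : Module.finrank ℝ E = n) (lam : Measure E) [lam.IsAddHaarMeasure]
    (f : E → ℝ) (hf : Continuous f) (c : ℝ) (hc : ∀ w, |f w| ≤ c / (1 + ‖w‖) ^ n) (v : E)
    (hi : Integrable (fun w => f (w + v) - f w) lam) :
    ∫ w, (f (w + v) - f w) ∂lam = 0 := by
  let φ : ℕ → E → ℝ := fun R w => max 0 (1 - ‖w‖ / (R + 1))
  have hR : ∀ R : ℕ, (0:ℝ) < R + 1 := fun R => by positivity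
  have hφc : ∀ R, Continuous (φ R) := fun R => by fun_prop
  have hφ0 : ∀ R w, 0 ≤ φ R w := fun R w => le_max_left _ _
  have hφ1 : ∀ R w, φ R w ≤ 1 := fun R w => by
    apply max_le zero_le_one
    have : 0 ≤ ‖w‖ / ((R:ℝ) + 1) := by positivity
    linarith
  have hφz : ∀ R : ℕ, ∀ w : E, (R:ℝ) + 1 ≤ ‖w‖ → φ R w = 0 := fun R w h => by
    apply max_eq_left
    have : 1 ≤ ‖w‖ / ((R:ℝ) + 1) := (one_le_div (hR R)).2 h
    linarith
  have hφs : ∀ R, HasCompactSupport (φ R) := fun R => by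
    apply HasCompactSupport.of_support_subset_isCompact (isCompact_closedBall (0:E) (R + 1))
    intro w hw
    by_contra h
    simp only [mem_closedBall, dist_zero_right, not_le] at h
    exact hw (hφz R w h.le)
  have hφl : ∀ (R : ℕ) (w : E), |φ R (w - v) - φ R w| ≤ ‖v‖ / (R + 1) := fun R w => by
    have h1 : |φ R (w - v) - φ R w| ≤ |(1 - ‖w - v‖ / ((R:ℝ) + 1)) - (1 - ‖w‖ / (R + 1))| := by
      have := abs_max_sub_max_le_max (0:ℝ) (1 - ‖w - v‖ / ((R:ℝ) + 1)) 0 (1 - ‖w‖ / (R + 1))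
      simpa using this
    refine h1.trans ?_
    have : (1 - ‖w - v‖ / ((R:ℝ) + 1)) - (1 - ‖w‖ / (R + 1)) = (‖w‖ - ‖w - v‖) / (R + 1) := by ring
    rw [this, abs_div, abs_of_pos (hR R)]
    gcongr
    have := abs_norm_sub_norm_le w (w - v)
    simpa using this
  have hc0 : 0 ≤ c := by
    have := (abs_nonneg _).trans (hc 0)
    simpa using this
  have key : ∀ R, ∫ w, (f (w + v) - f w) * φ R w ∂lam = ∫ w, f w * (φ R (w - v) - φ R w) ∂lam := by
    intro R
    have i1 : Integrable (fun w => f w * φ R w) lam :=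
      (hf.mul (hφc R)).integrable_of_hasCompactSupport (hφs R).mul_left
    have s2 : HasCompactSupport (fun w => φ R (w - v)) := by
      have := (hφs R).comp_homeomorph (Homeomorph.subRight v)
      exact this
    have s3 : HasCompactSupport (fun w => f (w + v) * φ R w) := (hφs R).mul_left
    have i2 : Integrable (fun w => f w * φ R (w - v)) lam :=
      (hf.mul ((hφc R).comp (continuous_id.sub continuous_const))).integrable_of_hasCompactSupport
        s2.mul_left
    have i3 : Integrable (fun w => f (w + v) * φ R w) lam :=
      ((hf.comp (continuous_id.add continuous_const)).mul (hφc R)).integrable_of_hasCompactSupport s3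
    simp only [sub_mul, mul_sub]
    rw [integral_sub i3 i1, integral_sub i2 i1]
    congr 1
    have := integral_add_right_eq_self (μ := lam) (fun w => f w * φ R (w - v)) v
    simpa using this
  have L1 : Tendsto (fun R => ∫ w, (f (w + v) - f w) * φ R w ∂lam) atTop
      (𝓝 (∫ w, (f (w + v) - f w) ∂lam)) := by
    apply tendsto_integral_of_dominated_convergence (fun w => |f (w + v) - f w|)
    · intro R
      exact hi.aestronglyMeasurable.mul (hφc R).aestronglyMeasurable
    · exact hi.abs
    · intro R
      refine ae_of_all _ fun w => ?_
      rw [Real.norm_eq_abs, abs_mul, abs_of_nonneg (hφ0 R w)]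
      exact mul_le_of_le_one_right (abs_nonneg _) (hφ1 R w)
    · refine ae_of_all _ fun w => ?_
      have h1 : Tendsto (fun R : ℕ => ‖w‖ / ((R:ℝ) + 1)) atTop (𝓝 0) :=
        tendsto_const_nhds.div_atTop (tendsto_natCast_atTop_atTop.atTop_add tendsto_const_nhds)
      have h2 : Tendsto (fun R : ℕ => φ R w) atTop (𝓝 (max 0 (1 - 0))) :=
        tendsto_const_nhds.max (tendsto_const_nhds.sub h1)
      have := (tendsto_const_nhds (x := f (w + v) - f w)).mul h2
      simpa using this
  have L2 : Tendsto (fun R => ∫ w, f w * (φ R (w - v) - φ R w) ∂lam) atTop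
      (𝓝 (∫ w, (0:ℝ) ∂lam)) := by
    apply tendsto_integral_of_dominated_convergence
      (fun w => (c * (‖v‖ * (2 + ‖v‖))) / (1 + ‖w‖) ^ (n + 1))
    · intro R
      exact (hf.mul (((hφc R).comp (continuous_id.sub continuous_const)).sub
        (hφc R))).aestronglyMeasurable
    · exact aux_int n hE lam _
    · intro R
      refine ae_of_all _ fun w => ?_
      have hw : 0 < 1 + ‖w‖ := by positivity
      have hd : |φ R (w - v) - φ R w| ≤ ‖v‖ * (2 + ‖v‖) / (1 + ‖w‖) := by
        by_cases h : (R:ℝ) + 1 + ‖v‖ ≤ ‖w‖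
        · rw [hφz R w (by linarith [norm_nonneg v]), hφz R (w - v) (by
            linarith [norm_sub_norm_le w v])]
          simp only [sub_self, abs_zero]
          positivity
        · push Not at h
          refine (hφl R w).trans ?_
          rw [div_le_div_iff₀ (hR R) hw, mul_assoc]
          gcongr
          have : (0:ℝ) ≤ R := by positivity
          nlinarith [norm_nonneg v]
      rw [Real.norm_eq_abs, abs_mul]
      calc _ ≤ c / (1 + ‖w‖) ^ n * (‖v‖ * (2 + ‖v‖) / (1 + ‖w‖)) := by
            gcongr
            exact hc w
        _ = _ := by rw [div_mul_div_comm, pow_succ]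
    · refine ae_of_all _ fun w => ?_
      have h1 : Tendsto (fun R : ℕ => |f w| * (‖v‖ / ((R:ℝ) + 1))) atTop (𝓝 (|f w| * 0)) :=
        tendsto_const_nhds.mul
        (tendsto_const_nhds.div_atTop (tendsto_natCast_atTop_atTop.atTop_add tendsto_const_nhds))
      rw [mul_zero] at h1
      refine squeeze_zero_norm (fun R => ?_) h1
      rw [Real.norm_eq_abs, abs_mul]
      gcongr
      exact hφl R w
  simp only [key] at L1
  simpa using tendsto_nhds_unique L1 L2

/-- Calderón–Zygmund difference estimate. -/
lemma aux_mvt (n : ℕ) (K : V → ℝ) (C : ℝ)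
    (hd : ∀ x : V, x ≠ 0 → DifferentiableAt ℝ K x)
    (h1 : ∀ x : V, x ≠ 0 → ‖fderiv ℝ K x‖ ≤ C / ‖x‖ ^ (n + 1)) (hC : 0 ≤ C)
    (s : Set V) (hs : Convex ℝ s) (m : ℝ) (hm : 0 < m) (hsm : ∀ x ∈ s, m ≤ ‖x‖)
    (p q : V) (hp : p ∈ s) (hq : q ∈ s) : |K p - K q| ≤ C / m ^ (n + 1) * ‖p - q‖ := by
  have h0 : ∀ x ∈ s, x ≠ 0 := fun x hx h => by
    have := hsm x hx
    rw [h, norm_zero] at this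
    linarith
  apply Convex.norm_image_sub_le_of_norm_fderiv_le (𝕜 := ℝ) (fun x hx => hd x (h0 x hx)) _ hs hq hp
  intro x hx
  refine (h1 x (h0 x hx)).trans ?_
  gcongr
  exact hsm x hx

lemma aux_decay (n : ℕ) (K : V → ℝ) (C : ℝ)
    (h0 : ∀ x : V, x ≠ 0 → |K x| ≤ C / ‖x‖ ^ n) (hC : 0 ≤ C) (m M : ℝ) (hm : 0 < m) (hM : 0 < M) :
    ∃ c, ∀ (p : V) (s : ℝ), m ≤ ‖p‖ → 0 ≤ s → s ≤ ‖p‖ + M → |K p| ≤ c / (1 + s) ^ n := by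
  refine ⟨C * (1 + (M + 1) / m) ^ n, fun p s hp hs hsp => ?_⟩
  have hp0 : p ≠ 0 := fun h => by rw [h, norm_zero] at hp; linarith
  refine (h0 p hp0).trans ?_
  have hpp : 0 < ‖p‖ := by linarith
  have : 1 + s ≤ (1 + (M + 1) / m) * ‖p‖ := by
    have : (M + 1) ≤ (M + 1) / m * ‖p‖ := by
      rw [div_mul_eq_mul_div, le_div_iff₀ hm]; gcongr
    linarith
  rw [div_le_div_iff₀ (by positivity) (by positivity), mul_assoc, ← mul_pow]
  gcongr

lemma aux_diff (n : ℕ) (K : V → ℝ) (C : ℝ)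
    (h0 : ∀ x : V, x ≠ 0 → |K x| ≤ C / ‖x‖ ^ n)
    (hd : ∀ x : V, x ≠ 0 → DifferentiableAt ℝ K x)
    (h1 : ∀ x : V, x ≠ 0 → ‖fderiv ℝ K x‖ ≤ C / ‖x‖ ^ (n + 1)) (hC : 0 ≤ C)
    (m M : ℝ) (hm : 0 < m) (hM : 0 < M) :
    ∃ c, 0 ≤ c ∧ ∀ (p q : V) (s : ℝ), m ≤ ‖p‖ → m ≤ ‖q‖ → ‖p - q‖ ≤ M → 0 ≤ s → s ≤ ‖p‖ + M →
      |K p - K q| ≤ c / (1 + s) ^ (n + 1) := by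
  set κ : ℝ := 1 + (M + 1) / m with hκ
  have hκ0 : 0 < κ := by positivity
  refine ⟨C * M * (2 * κ) ^ (n + 1) + 2 * C / m ^ n * (2 * M * κ) ^ (n + 1), by positivity,
    fun p q s hp hq hpq hs hsp => ?_⟩
  have hpp : 0 < ‖p‖ := by linarith
  have hκp : 1 + s ≤ κ * ‖p‖ := by
    have : (M + 1) ≤ (M + 1) / m * ‖p‖ := by
      rw [div_mul_eq_mul_div, le_div_iff₀ hm]; gcongr
    rw [hκ]; linarith
  have hs1 : 0 < 1 + s := by linarith
  rw [add_div]
  by_cases h : 2 * M ≤ ‖p‖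
  · have e1 : |K p - K q| ≤ C / (‖p‖ / 2) ^ (n + 1) * ‖p - q‖ := by
      apply aux_mvt n K C hd h1 hC (closedBall p M) (convex_closedBall _ _) (‖p‖ / 2) (by positivity)
      · intro x hx
        have := norm_sub_norm_le p x
        rw [mem_closedBall, dist_eq_norm, norm_sub_rev] at hx
        linarith
      · exact mem_closedBall_self hM.le
      · rw [mem_closedBall, dist_eq_norm, norm_sub_rev]; exact hpq
    have e2 : C / (‖p‖ / 2) ^ (n + 1) * ‖p - q‖ ≤ C * M * (2 * κ) ^ (n + 1) / (1 + s) ^ (n + 1) := by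
      calc _ ≤ C / (‖p‖ / 2) ^ (n + 1) * M := by gcongr
        _ = (C * M) / (‖p‖ / 2) ^ (n + 1) := by ring
        _ ≤ _ := by
          rw [div_le_div_iff₀ (by positivity) (by positivity), mul_assoc (C * M), ← mul_pow]
          gcongr
          linarith
    have e3 : 0 ≤ 2 * C / m ^ n * (2 * M * κ) ^ (n + 1) / (1 + s) ^ (n + 1) := by positivity
    linarith
  · push Not at h
    have hp0 : p ≠ 0 := norm_pos_iff.1 hpp
    have hq0 : q ≠ 0 := norm_pos_iff.1 (by linarith)
    have a1 : |K p| ≤ C / m ^ n := (h0 p hp0).trans (by gcongr)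
    have a2 : |K q| ≤ C / m ^ n := (h0 q hq0).trans (by gcongr)
    have a3 : |K p - K q| ≤ 2 * C / m ^ n := by
      have := abs_sub (K p) (K q)
      have e : 2 * C / m ^ n = C / m ^ n + C / m ^ n := by ring
      linarith
    have e3 : 0 ≤ C * M * (2 * κ) ^ (n + 1) / (1 + s) ^ (n + 1) := by positivity
    have e2 : 2 * C / m ^ n ≤ 2 * C / m ^ n * (2 * M * κ) ^ (n + 1) / (1 + s) ^ (n + 1) := by
      rw [le_div_iff₀ (by positivity)]
      gcongr
      nlinarith
    linarith


lemma aux_haus {α β γ : Type*} [Nonempty α] [MetricSpace β] [MeasurableSpace β] [BorelSpace β]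
    [MetricSpace γ] [MeasurableSpace γ] [BorelSpace γ] (f : α → β) (g : α → γ) (S : Set α) (c : ℝ≥0)
    (d : ℝ) (hd : 0 ≤ d)
    (h : ∀ p ∈ S, ∀ q ∈ S, dist (f p) (f q) ≤ c * dist (g p) (g q)) :
    μH[d] (f '' S) ≤ (c : ℝ≥0∞) ^ d * μH[d] (g '' S) := by
  have hinv : ∀ p ∈ S, Function.invFunOn g S (g p) ∈ S ∧ g (Function.invFunOn g S (g p)) = g p :=
    fun p hp => ⟨Function.invFunOn_mem ⟨p, hp, rfl⟩, Function.invFunOn_eq ⟨p, hp, rfl⟩⟩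
  have hL : LipschitzOnWith c (f ∘ Function.invFunOn g S) (g '' S) := by
    apply LipschitzOnWith.of_dist_le_mul
    rintro _ ⟨p, hp, rfl⟩ _ ⟨q, hq, rfl⟩
    have := h _ (hinv p hp).1 _ (hinv q hq).1
    rw [(hinv p hp).2, (hinv q hq).2] at this
    exact this
  have him : (f ∘ Function.invFunOn g S) '' (g '' S) = f '' S := by
    rw [image_image]
    apply image_congr
    intro p hp
    have := h _ (hinv p hp).1 _ hp
    rw [(hinv p hp).2, dist_self, mul_zero] at this
    exact dist_le_zero.1 this
  have := hL.hausdorffMeasure_image_le hd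
  rwa [him] at this

lemma aux_density (lam nu : Measure E) [lam.IsAddHaarMeasure] (M : ℝ≥0) (z : E)
    (h1 : ∀ S, MeasurableSet S → nu S ≤ M * lam S)
    (h2 : ∀ ε : ℝ≥0, 0 < ε → ∃ δ > 0, ∀ S, MeasurableSet S → S ⊆ ball z δ →
      nu S ≤ (1 + ε) * lam S ∧ lam S ≤ (1 + ε) * nu S) :
    ∃ J : E → ℝ≥0, Measurable J ∧ (∀ w, J w ≤ M + 1) ∧ Tendsto J (𝓝 z) (𝓝 1) ∧
      nu = lam.withDensity (fun w => (J w : ℝ≥0∞)) := by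
  have hle : nu ≤ (M : ℝ≥0∞) • lam := Measure.le_iff.2 fun S hS => by simpa using h1 S hS
  have hac : nu ≪ lam := (Measure.absolutelyContinuous_of_le hle).trans
    Measure.smul_absolutelyContinuous
  have : IsFiniteMeasureOnCompacts nu := ⟨fun K hK => by
    refine (Measure.le_iff'.1 hle K).trans_lt ?_
    simpa using ENNReal.mul_lt_top ENNReal.coe_lt_top hK.measure_lt_top⟩
  have : SigmaFinite nu := inferInstance
  set ρ := nu.rnDeriv lam with hρ
  have hρm : Measurable ρ := Measure.measurable_rnDeriv _ _
  have hnu : lam.withDensity ρ = nu := Measure.withDensity_rnDeriv_eq _ _ hac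
  have hset : ∀ S, MeasurableSet S → ∫⁻ w in S, ρ w ∂lam = nu S := fun S hS => by
    rw [← withDensity_apply _ hS, hnu]
  have hM : ∀ᵐ w ∂lam, ρ w ≤ M := by
    apply ae_le_of_forall_setLIntegral_le_of_sigmaFinite hρm
    intro S hS _
    rw [hset S hS]
    simpa using h1 S hS
  have hε : ∀ j : ℕ, ∃ δ > 0, ∀ᵐ w ∂lam, w ∈ ball z δ →
      ρ w ≤ 1 + ((1 / (j + 1) : ℝ≥0) : ℝ≥0∞) ∧ 1 ≤ (1 + ((1 / (j + 1) : ℝ≥0) : ℝ≥0∞)) * ρ w := by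
    intro j
    obtain ⟨δ, hδ, h⟩ := h2 (1 / (j + 1)) (by positivity)
    refine ⟨δ, hδ, ?_⟩
    set e : ℝ≥0∞ := 1 + ((1 / (j + 1) : ℝ≥0) : ℝ≥0∞) with he
    rw [← ae_restrict_iff' measurableSet_ball]
    have hA : ρ ≤ᵐ[lam.restrict (ball z δ)] fun _ => e := by
      apply ae_le_of_forall_setLIntegral_le_of_sigmaFinite hρm
      intro S hS _
      rw [Measure.restrict_restrict hS, hset _ (hS.inter measurableSet_ball)]
      simpa using (h _ (hS.inter measurableSet_ball) inter_subset_right).1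
    have hB : (fun _ => (1:ℝ≥0∞)) ≤ᵐ[lam.restrict (ball z δ)] fun w => e * ρ w := by
      apply ae_le_of_forall_setLIntegral_le_of_sigmaFinite measurable_const
      intro S hS _
      rw [Measure.restrict_restrict hS, lintegral_const_mul _ hρm,
        hset _ (hS.inter measurableSet_ball)]
      simpa using (h _ (hS.inter measurableSet_ball) inter_subset_right).2
    filter_upwards [hA, hB] with w a b using ⟨a, b⟩
  choose δ hδ hδ' using hε
  have hall : ∀ᵐ w ∂lam, ρ w ≤ M ∧ ∀ j : ℕ, w ∈ ball z (δ j) →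
      ρ w ≤ 1 + ((1 / (j + 1) : ℝ≥0) : ℝ≥0∞) ∧ 1 ≤ (1 + ((1 / (j + 1) : ℝ≥0) : ℝ≥0∞)) * ρ w :=
    hM.and (ae_all_iff.2 hδ')
  obtain ⟨t, htsub, htm, ht0⟩ := exists_measurable_superset_of_null hall
  have hgood : ∀ w ∉ t, ρ w ≤ M ∧ ∀ j : ℕ, w ∈ ball z (δ j) →
      ρ w ≤ 1 + ((1 / (j + 1) : ℝ≥0) : ℝ≥0∞) ∧ 1 ≤ (1 + ((1 / (j + 1) : ℝ≥0) : ℝ≥0∞)) * ρ w := by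
    intro w hw
    by_contra h
    exact hw (htsub h)
  classical
  refine ⟨t.piecewise (fun _ => 1) (fun w => (ρ w).toNNReal),
    Measurable.piecewise htm measurable_const hρm.ennreal_toNNReal, ?_, ?_, ?_⟩
  · intro w
    by_cases hw : w ∈ t
    · simp [hw]
    · simp only [hw, not_false_eq_true, piecewise_eq_of_notMem]
      have := ENNReal.toNNReal_mono ENNReal.coe_ne_top (hgood w hw).1
      rw [ENNReal.toNNReal_coe] at this
      exact this.trans (by simp)
  · have hl : Tendsto (fun j : ℕ => (1 / ((j:ℝ) + 1))) atTop (𝓝 0) :=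
      tendsto_one_div_add_atTop_nhds_zero_nat
    rw [Metric.tendsto_nhds]
    intro ε hε
    obtain ⟨j, hj⟩ := (hl.eventually (gt_mem_nhds hε)).exists
    filter_upwards [ball_mem_nhds z (hδ j)] with w hw
    by_cases hwt : w ∈ t
    · simpa [hwt] using hε
    · simp only [hwt, not_false_eq_true, piecewise_eq_of_notMem]
      obtain ⟨hb, hb'⟩ := hgood w hwt
      obtain ⟨q1, q2⟩ := hb' j hw
      have hfin : ρ w ≠ ∞ := ne_top_of_le_ne_top ENNReal.coe_ne_top hb
      lift ρ w to ℝ≥0 using hfin with r hr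
      rw [ENNReal.toNNReal_coe]
      have q1' : r ≤ 1 + 1 / ((j:ℝ≥0) + 1) := by exact_mod_cast q1
      have q2' : 1 ≤ (1 + 1 / ((j:ℝ≥0) + 1)) * r := by exact_mod_cast q2
      have q1r : (r:ℝ) ≤ 1 + 1 / ((j:ℝ) + 1) := by exact_mod_cast q1'
      have q2r : (1:ℝ) ≤ (1 + 1 / ((j:ℝ) + 1)) * r := by exact_mod_cast q2'
      have hp : (0:ℝ) < 1 / ((j:ℝ) + 1) := by positivity
      rw [NNReal.dist_eq, NNReal.coe_one, abs_lt]
      have hr0 := r.2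
      change (0:ℝ) ≤ r at hr0
      constructor
      · by_contra hcon
        push Not at hcon
        nlinarith
      · linarith
  · rw [← hnu]
    apply withDensity_congr_ae
    have : ∀ᵐ w ∂lam, w ∉ t := measure_eq_zero_iff_ae_notMem.1 ht0
    filter_upwards [this] with w hw
    simp only [hw, not_false_eq_true, piecewise_eq_of_notMem]
    exact (ENNReal.coe_toNNReal (ne_top_of_le_ne_top ENNReal.coe_ne_top (hgood w hw).1)).symm

/-- Independence of the direction. -/
lemma aux_direction (n : ℕ) (hE : Module.finrank ℝ E = n) (lam : Measure E) [lam.IsAddHaarMeasure]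
    (K : V → ℝ) (C : ℝ)
    (hKc : ∀ x : V, x ≠ 0 → ContinuousAt K x)
    (hhom : ∀ (x : V) (t : ℝ), 0 < t → K (t • x) = (t ^ n)⁻¹ * K x)
    (h0 : ∀ x : V, x ≠ 0 → |K x| ≤ C / ‖x‖ ^ n)
    (hd : ∀ x : V, x ≠ 0 → DifferentiableAt ℝ K x)
    (h1 : ∀ x : V, x ≠ 0 → ‖fderiv ℝ K x‖ ≤ C / ‖x‖ ^ (n + 1)) (hC : 0 ≤ C)
    (G : E →L[ℝ] V) (hG : ∀ k, ‖k‖ ≤ ‖G k‖) (N : V) (hN : ‖N‖ = 1) (hGN : ∀ k, ⟪G k, N⟫ = 0)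
    (v : E) (t : ℝ) (ht : 0 < t) :
    ∫ k, (K (G k + (G v + t • N)) - K (G k - (G v + t • N))) ∂lam =
      ∫ k, (K (G k + N) - K (G k - N)) ∂lam := by
  have hinner : ∀ (k : E) (σ : ℝ), ⟪G k + σ • N, N⟫ = σ := fun k σ => by
    rw [inner_add_left, hGN, inner_smul_left, real_inner_self_eq_norm_sq, hN]; simp
  have hlow : ∀ (k : E) (σ : ℝ), |σ| ≤ ‖G k + σ • N‖ := fun k σ => by
    have := abs_real_inner_le_norm (G k + σ • N) N
    rwa [hinner, hN, mul_one] at this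
  have hup : ∀ (k : E) (σ : ℝ), ‖k‖ ≤ ‖G k + σ • N‖ + |σ| := fun k σ => by
    have e1 := norm_sub_le (G k + σ • N) (σ • N)
    rw [add_sub_cancel_right, norm_smul, hN, mul_one, Real.norm_eq_abs] at e1
    exact (hG k).trans e1
  have hcont : ∀ σ : ℝ, σ ≠ 0 → Continuous (fun k : E => K (G k + σ • N)) := fun σ hσ => by
    rw [continuous_iff_continuousAt]
    intro k
    have : G k + σ • N ≠ 0 := norm_pos_iff.1 (lt_of_lt_of_le (abs_pos.2 hσ) (hlow k σ))
    exact ContinuousAt.comp (f := fun k : E => G k + σ • N) (hKc _ this) (by fun_prop)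
  -- integrability of differences of shifted functions
  have hint : ∀ (σ τ : ℝ) (p q : E), σ ≠ 0 → τ ≠ 0 →
      Integrable (fun k : E => K (G (k + p) + σ • N) - K (G (k + q) + τ • N)) lam := by
    intro σ τ p q hσ hτ
    set m := min |σ| |τ|
    have hm : 0 < m := lt_min (abs_pos.2 hσ) (abs_pos.2 hτ)
    set M := ‖G (p - q)‖ + |σ| + |τ| + ‖p‖
    have hM : 0 < M := by have := abs_pos.2 hσ; positivity
    obtain ⟨c, hc0, hc⟩ := aux_diff n K C h0 hd h1 hC m M hm hM
    refine (aux_int n hE lam c).mono' ?_ (ae_of_all _ fun k => ?_)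
    · exact (((hcont σ hσ).comp (continuous_id.add continuous_const)).sub
        ((hcont τ hτ).comp (continuous_id.add continuous_const))).aestronglyMeasurable
    · rw [Real.norm_eq_abs]
      apply hc
      · exact (min_le_left _ _).trans (hlow _ _)
      · exact (min_le_right _ _).trans (hlow _ _)
      · have : G (k + p) + σ • N - (G (k + q) + τ • N) = G (p - q) + σ • N - τ • N := by
          simp only [map_add, map_sub]; abel
        rw [this]
        have e1 := norm_sub_le (G (p - q) + σ • N) (τ • N)
        have e2 := norm_add_le (G (p - q)) (σ • N)
        rw [norm_smul, hN, mul_one, Real.norm_eq_abs] at e1 e2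
        have := norm_nonneg p
        linarith
      · positivity
      · have e1 := hup (k + p) σ
        have e2 := norm_sub_le (k + p) p
        rw [add_sub_cancel_right] at e2
        have := norm_nonneg (G (p - q))
        have := abs_nonneg τ
        linarith
  have hzero : ∀ (σ : ℝ) (p : E), σ ≠ 0 →
      ∫ k, (K (G (k + p) + σ • N) - K (G k + σ • N)) ∂lam = 0 := by
    intro σ p hσ
    obtain ⟨c, hc⟩ := aux_decay n K C h0 hC |σ| |σ| (abs_pos.2 hσ) (abs_pos.2 hσ)
    refine aux_translate n hE lam (fun k => K (G k + σ • N)) (hcont σ hσ) c (fun k => ?_) p ?_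
    · exact hc _ _ (hlow _ _) (norm_nonneg _) (hup _ _)
    · simpa using hint σ σ p 0 hσ hσ
  have ht' : -t ≠ 0 := by linarith
  have step1 : ∫ k, (K (G k + (G v + t • N)) - K (G k - (G v + t • N))) ∂lam
      = ∫ k, (K (G k + t • N) - K (G k - t • N)) ∂lam := by
    have e : ∀ k, K (G k + (G v + t • N)) - K (G k - (G v + t • N)) =
        (K (G k + t • N) - K (G k - t • N)) +
        ((K (G (k + v) + t • N) - K (G k + t • N)) -
          (K (G (k + -v) + (-t) • N) - K (G k + (-t) • N))) := by
      intro k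
      have q1 : G k + (G v + t • N) = G (k + v) + t • N := by rw [map_add]; abel
      have q2 : G k - (G v + t • N) = G (k + -v) + (-t) • N := by
        rw [map_add, map_neg, neg_smul]; abel
      have q3 : G k - t • N = G k + (-t) • N := by rw [neg_smul]; abel
      rw [q1, q2, q3]; ring
    simp only [e]
    have i1 : Integrable (fun k => K (G k + t • N) - K (G k - t • N)) lam := by
      simpa [sub_eq_add_neg] using hint t (-t) 0 0 ht.ne' ht'
    have i2 : Integrable (fun k => K (G (k + v) + t • N) - K (G k + t • N)) lam := by
      simpa using hint t t v 0 ht.ne' ht.ne'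
    have i3 : Integrable (fun k => K (G (k + -v) + (-t) • N) - K (G k + (-t) • N)) lam := by
      have := hint (-t) (-t) (-v) 0 ht' ht'
      simpa only [add_zero] using this
    have i4 : Integrable (fun k => (K (G (k + v) + t • N) - K (G k + t • N)) -
          (K (G (k + -v) + (-t) • N) - K (G k + (-t) • N))) lam := i2.sub i3
    rw [integral_add i1 i4, integral_sub i2 i3, hzero t v ht.ne', hzero (-t) (-v) ht']
    simp
  rw [step1]
  have e : ∀ k, K (G k + t • N) - K (G k - t • N) =
      (t ^ n)⁻¹ * (fun k => K (G k + N) - K (G k - N)) (t⁻¹ • k) := by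
    intro k
    have q1 : G k + t • N = t • (G (t⁻¹ • k) + N) := by
      rw [map_smul, smul_add, smul_smul, mul_inv_cancel₀ ht.ne', one_smul]
    have q2 : G k - t • N = t • (G (t⁻¹ • k) - N) := by
      rw [map_smul, smul_sub, smul_smul, mul_inv_cancel₀ ht.ne', one_smul]
    rw [q1, q2, hhom _ _ ht, hhom _ _ ht]; ring
  simp only [e]
  rw [integral_const_mul, Measure.integral_comp_inv_smul_of_nonneg lam
    (fun k => K (G k + N) - K (G k - N)) ht.le, hE, smul_eq_mul, ← mul_assoc,
    inv_mul_cancel₀ (by positivity), one_mul]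

lemma aux_main [MeasurableSpace V] [BorelSpace V] [SecondCountableTopology V]
    (n : ℕ) (hE : Module.finrank ℝ E = n) (lam : Measure E) [lam.IsAddHaarMeasure]
    (K : V → ℝ) (C : ℝ) (hKm : Measurable K) (hKodd : ∀ x, K (-x) = - K x)
    (hKc : ∀ x : V, x ≠ 0 → ContinuousAt K x)
    (hhom : ∀ (x : V) (t : ℝ), 0 < t → K (t • x) = (t ^ n)⁻¹ * K x)
    (h0 : ∀ x : V, x ≠ 0 → |K x| ≤ C / ‖x‖ ^ n)
    (hd : ∀ x : V, x ≠ 0 → DifferentiableAt ℝ K x)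
    (h1 : ∀ x : V, x ≠ 0 → ‖fderiv ℝ K x‖ ≤ C / ‖x‖ ^ (n + 1)) (hC : 0 ≤ C)
    (G : E →L[ℝ] V) (hG : ∀ k, ‖k‖ ≤ ‖G k‖) (N : V) (hN : ‖N‖ = 1) (hGN : ∀ k, ⟪G k, N⟫ = 0)
    (hdec : ∀ u : V, ∃ v : E, u = G v + ⟪u, N⟫ • N)
    (Φ : E → V) (hΦc : Continuous Φ) (z : E) (hΦd : HasFDerivAt Φ G z)
    (hΦl : ∀ p q, ‖p - q‖ ≤ ‖Φ p - Φ q‖)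
    (J : E → ℝ) (hJm : Measurable J) (M : ℝ) (hJ : ∀ w, |J w| ≤ M) (hJ1 : Tendsto J (𝓝 z) (𝓝 1))
    (g : V → ℝ) (hgc : Continuous g) (B : ℝ) (hB : ∀ w, |g w| ≤ B)
    (hgi : Integrable (fun w => g (Φ w)) lam)
    (a b : ℝ) (ha : a ∈ Set.Ioo (0 : ℝ) 1) (hb : b ∈ Set.Ioo 0 a) (x : V) (hx : x = Φ z) :
    Tendsto (fun y =>
      ((∫ w, J w * (if b * dist x y < dist y (Φ w) then K (y - Φ w) * g (Φ w) else 0) ∂lam)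
      - ∫ w, J w * (if b * dist x y < dist ((2:ℝ) • x - y) (Φ w) then
          K ((2:ℝ) • x - y - Φ w) * g (Φ w) else 0) ∂lam) / 2)
      (𝓝[{y | a * ‖y - x‖ < ⟪y - x, N⟫}] x)
      (𝓝 ((∫ k, (K (G k + N) - K (G k - N)) ∂lam) / 2 * g x)) := by
  obtain ⟨ha0, ha1⟩ := ha
  obtain ⟨hb0, hba⟩ := hb
  set L : Filter V := 𝓝[{y | a * ‖y - x‖ < ⟪y - x, N⟫}] x with hL
  have hM0 : 0 ≤ M := (abs_nonneg _).trans (hJ z)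
  have hB0 : 0 ≤ B := (abs_nonneg _).trans (hB x)
  set r : V → ℝ := fun y => ‖y - x‖ with hr
  set u : V → V := fun y => (r y)⁻¹ • (y - x) with hu
  set p : V → E → V := fun y k => (r y)⁻¹ • (Φ (z + r y • k) - x) with hp
  set m : ℝ := max b (a / 2) with hm
  have hm0 : 0 < m := lt_max_of_lt_left hb0
  have hma : m < a := max_lt hba (by linarith)
  obtain ⟨c, hc0, hc⟩ := aux_diff n K C h0 hd h1 hC m 2 hm0 two_pos
  -- basic facts in the cone
  have hcone : ∀ᶠ y in L, a * ‖y - x‖ < ⟪y - x, N⟫ := eventually_mem_nhdsWithin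
  have hbasic : ∀ᶠ y in L, 0 < r y ∧ ‖u y‖ = 1 ∧ a < ⟪u y, N⟫ := by
    filter_upwards [hcone] with y hy
    have hne : y - x ≠ 0 := by
      intro h; rw [h] at hy; simp at hy
    have hrp : 0 < r y := norm_pos_iff.2 hne
    refine ⟨hrp, ?_, ?_⟩
    · simp only [hu, norm_smul, norm_inv, Real.norm_eq_abs, abs_of_pos hrp]
      exact inv_mul_cancel₀ hrp.ne'
    · simp only [hu, inner_smul_left, RCLike.conj_to_real]
      rw [← div_eq_inv_mul, lt_div_iff₀ hrp]
      exact hy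
  have hrt : Tendsto r L (𝓝 0) := by
    have : Tendsto r (𝓝 x) (𝓝 (r x)) := (by fun_prop : Continuous r).tendsto x
    simp only [hr, sub_self, norm_zero] at this
    exact this.mono_left nhdsWithin_le_nhds
  have hrt' : Tendsto r L (𝓝[≠] 0) := by
    rw [tendsto_nhdsWithin_iff]
    exact ⟨hrt, hbasic.mono fun y hy => hy.1.ne'⟩
  -- linear approximations
  have hplow : ∀ᶠ y in L, ∀ k, ‖k‖ ≤ ‖p y k‖ := by
    filter_upwards [hbasic] with y hy k
    have := hΦl (z + r y • k) z
    rw [add_sub_cancel_left, norm_smul, Real.norm_eq_abs, abs_of_pos hy.1, ← hx] at this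
    simp only [hp, norm_smul, norm_inv, Real.norm_eq_abs, abs_of_pos hy.1]
    rw [← div_eq_inv_mul, le_div_iff₀ hy.1, mul_comm]
    exact this
  have hpapp : ∀ᶠ y in L, ∀ k, ‖k‖ < 2 → ‖p y k - G k‖ ≤ a - m := by
    have h := (hasFDerivAt_iff_isLittleO_nhds_zero.1 hΦd).def (c := (a - m) / 2) (by linarith)
    rw [Metric.eventually_nhds_iff] at h
    obtain ⟨δ, hδ, h⟩ := h
    filter_upwards [hbasic, hrt.eventually (gt_mem_nhds (show (0:ℝ) < δ / 2 by linarith))] with y hy hyδ k hk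
    have h2 := h (y := r y • k) (by
      rw [dist_zero_right, norm_smul, Real.norm_eq_abs, abs_of_pos hy.1]
      have := hy.1
      nlinarith [norm_nonneg k])
    have e : p y k - G k = (r y)⁻¹ • (Φ (z + r y • k) - Φ z - G (r y • k)) := by
      simp only [hp]
      rw [smul_sub _ (Φ (z + r y • k) - Φ z), map_smul, smul_smul, inv_mul_cancel₀ hy.1.ne',
        one_smul, hx]
    rw [e, norm_smul, norm_inv, Real.norm_eq_abs, abs_of_pos hy.1, ← div_eq_inv_mul,
      div_le_iff₀ hy.1]
    rw [norm_smul, Real.norm_eq_abs, abs_of_pos hy.1] at h2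
    refine h2.trans ?_
    have h3 : (a - m) / 2 * (r y * ‖k‖) ≤ (a - m) / 2 * (r y * 2) := by
      have := hy.1
      have : 0 ≤ a - m := by linarith
      gcongr
    linarith
  have hpm : ∀ᶠ y in L, ∀ k, m < ‖p y k + u y‖ ∧ m < ‖p y k - u y‖ := by
    filter_upwards [hbasic, hplow, hpapp] with y hy hyl hya k
    by_cases hk : ‖k‖ < 2
    · have h2 := hya k hk
      have e0 : |⟪p y k, N⟫| ≤ a - m := by
        have := abs_real_inner_le_norm (p y k - G k) N
        rw [inner_sub_left, hGN, sub_zero, hN, mul_one] at this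
        exact this.trans h2
      obtain ⟨e1, e2⟩ := abs_le.1 e0
      constructor
      · have := abs_real_inner_le_norm (p y k + u y) N
        rw [inner_add_left, hN, mul_one] at this
        have := (abs_le.1 this).2
        linarith [hy.2.2]
      · have := abs_real_inner_le_norm (p y k - u y) N
        rw [inner_sub_left, hN, mul_one] at this
        have := (abs_le.1 this).1
        linarith [hy.2.2]
    · push Not at hk
      have e1 := hyl k
      have e2 := norm_sub_le (p y k + u y) (u y)
      have e3 := norm_add_le (p y k - u y) (u y)
      rw [add_sub_cancel_right, hy.2.1] at e2
      rw [sub_add_cancel, hy.2.1] at e3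
      constructor <;> linarith
  have hGm : ∀ᶠ y in L, ∀ k, m < ‖G k + u y‖ ∧ m < ‖G k - u y‖ := by
    filter_upwards [hbasic] with y hy k
    constructor
    · have := abs_real_inner_le_norm (G k + u y) N
      rw [inner_add_left, hN, mul_one, hGN] at this
      have := (abs_le.1 this).2
      linarith [hy.2.2]
    · have := abs_real_inner_le_norm (G k - u y) N
      rw [inner_sub_left, hN, mul_one, hGN] at this
      have := (abs_le.1 this).1
      linarith [hy.2.2]
  set Q : V → V → ℝ := fun q v => K (q + v) - K (q - v) with hQ
  have hQb : ∀ (q v : V) (k : E), ‖v‖ = 1 → m < ‖q + v‖ → m < ‖q - v‖ → ‖k‖ ≤ ‖q‖ →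
      |Q q v| ≤ c / (1 + ‖k‖) ^ (n + 1) := by
    intro q v k hv e1 e2 hk
    apply hc _ _ _ e1.le e2.le _ (norm_nonneg _)
    · have e2 := norm_sub_le (q + v) v
      rw [add_sub_cancel_right, hv] at e2
      linarith
    · have : q + v - (q - v) = v + v := by abel
      rw [this]
      have := norm_add_le v v
      linarith
  have hQm : ∀ v, Measurable (fun q => Q q v) := fun v =>
    (hKm.comp (measurable_id.add_const v)).sub (hKm.comp (measurable_id.sub_const v))
  have hpmeas : ∀ y, Continuous (p y) := fun y => by
    simp only [hp]; fun_prop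
  set F1 : V → E → ℝ := fun y k => J (z + r y • k) * g (Φ (z + r y • k)) * Q (p y k) (u y) with hF1
  set F2 : V → E → ℝ := fun y k => g x * Q (G k) (u y) with hF2
  have hF1m : ∀ y, Measurable (F1 y) := fun y => by
    refine Measurable.mul (Measurable.mul (hJm.comp ?_) ?_) ((hQm (u y)).comp (hpmeas y).measurable)
    · exact (by fun_prop : Continuous fun k : E => z + r y • k).measurable
    · exact (by fun_prop : Continuous fun k : E => g (Φ (z + r y • k))).measurable
  have hF2m : ∀ y, Measurable (F2 y) := fun y =>
    ((hQm (u y)).comp G.continuous.measurable).const_mul _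
  have hF1b : ∀ᶠ y in L, ∀ k, ‖F1 y k‖ ≤ (M * B * c) / (1 + ‖k‖) ^ (n + 1) := by
    filter_upwards [hbasic, hplow, hpm] with y hy hyl hym k
    simp only [hF1, Real.norm_eq_abs, abs_mul]
    rw [mul_div_assoc]
    have := hQb (p y k) (u y) k hy.2.1 (hym k).1 (hym k).2 (hyl k)
    gcongr
    · exact hJ _
    · exact hB _
  have hF2b : ∀ᶠ y in L, ∀ k, ‖F2 y k‖ ≤ (B * c) / (1 + ‖k‖) ^ (n + 1) := by
    filter_upwards [hbasic, hGm] with y hy hym k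
    simp only [hF2, Real.norm_eq_abs, abs_mul]
    rw [mul_div_assoc]
    have := hQb (G k) (u y) k hy.2.1 (hym k).1 (hym k).2 (hG k)
    gcongr
    exact hB _
  -- convergence
  have hconv : Tendsto (fun y => ∫ k, (F1 y k - F2 y k) ∂lam) L (𝓝 (∫ _k : E, (0:ℝ) ∂lam)) := by
    apply tendsto_integral_filter_of_dominated_convergence
      (fun k => (M * B * c + B * c) / (1 + ‖k‖) ^ (n + 1))
    · exact Eventually.of_forall fun y => ((hF1m y).sub (hF2m y)).aestronglyMeasurable
    · filter_upwards [hF1b, hF2b] with y e1 e2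
      refine ae_of_all _ fun k => ?_
      rw [add_div]
      exact (norm_sub_le _ _).trans (add_le_add (e1 k) (e2 k))
    · exact aux_int n hE lam _
    · refine ae_of_all _ fun k => ?_
      have hpk : Tendsto (fun y => p y k) L (𝓝 (G k)) := by
        have h := (hΦd.hasLineDerivAt k)
        have h' := hasDerivAt_iff_tendsto_slope_zero.1 h
        simp only [zero_add, zero_smul, add_zero] at h'
        rw [← hx] at h'
        exact h'.comp hrt'
      have hpk0 : Tendsto (fun y => ‖p y k - G k‖) L (𝓝 0) := by
        have := (hpk.sub (tendsto_const_nhds (x := G k))).norm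
        simpa using this
      have hzk : Tendsto (fun y => z + r y • k) L (𝓝 z) := by
        have := (tendsto_const_nhds (x := z) (f := L)).add (hrt.smul (tendsto_const_nhds (x := k)))
        simpa using this
      have hJg : Tendsto (fun y => J (z + r y • k) * g (Φ (z + r y • k)) - g x) L (𝓝 0) := by
        have e1 := hJ1.comp hzk
        have e2 := ((hgc.comp hΦc).tendsto z).comp hzk
        have := (e1.mul e2).sub (tendsto_const_nhds (x := g x))
        simpa [hx] using this
      have hbound : Tendsto (fun y => |J (z + r y • k) * g (Φ (z + r y • k)) - g x| *
          (c / (1 + ‖k‖) ^ (n + 1)) + |g x| * (2 * (C / (a / 2) ^ (n + 1) * ‖p y k - G k‖))) L (𝓝 0) := by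
        have e1 := hJg.abs.mul_const (c / (1 + ‖k‖) ^ (n + 1))
        have e2 := ((hpk0.const_mul (C / (a / 2) ^ (n + 1))).const_mul 2).const_mul |g x|
        simpa using e1.add e2
      refine squeeze_zero_norm' ?_ hbound
      filter_upwards [hbasic, hplow, hpm, hpk0.eventually (gt_mem_nhds (show (0:ℝ) < a / 2 by linarith))]
        with y hy hyl hym hyp
      have e0 : |⟪p y k, N⟫| ≤ a / 2 := by
        have := abs_real_inner_le_norm (p y k - G k) N
        rw [inner_sub_left, hGN, sub_zero, hN, mul_one] at this
        exact this.trans hyp.le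
      obtain ⟨e01, e02⟩ := abs_le.1 e0
      have hcv1 : Convex ℝ {ξ : V | a / 2 ≤ ⟪ξ, N⟫} := by
        simp_rw [real_inner_comm N]
        exact convex_halfSpace_ge (innerSL ℝ N).isLinear _
      have hcv2 : Convex ℝ {ξ : V | ⟪ξ, N⟫ ≤ -(a / 2)} := by
        simp_rw [real_inner_comm N]
        exact convex_halfSpace_le (innerSL ℝ N).isLinear _
      have q1 : |K (p y k + u y) - K (G k + u y)| ≤ C / (a / 2) ^ (n + 1) * ‖p y k - G k‖ := by
        have := aux_mvt n K C hd h1 hC _ hcv1 (a / 2) (by linarith) (fun ξ hξ => by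
          have h := abs_real_inner_le_norm ξ N
          rw [hN, mul_one] at h
          have h := (abs_le.1 h).2
          have : a / 2 ≤ ⟪ξ, N⟫ := hξ
          linarith) (p y k + u y) (G k + u y)
          (by simp only [mem_ofPred_eq, inner_add_left]; linarith [hy.2.2])
          (by simp only [mem_ofPred_eq, inner_add_left, hGN]; linarith [hy.2.2])
        simpa using this
      have q2 : |K (p y k - u y) - K (G k - u y)| ≤ C / (a / 2) ^ (n + 1) * ‖p y k - G k‖ := by
        have := aux_mvt n K C hd h1 hC _ hcv2 (a / 2) (by linarith) (fun ξ hξ => by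
          have h := abs_real_inner_le_norm ξ N
          rw [hN, mul_one] at h
          have h := (abs_le.1 h).1
          have : ⟪ξ, N⟫ ≤ -(a / 2) := hξ
          linarith) (p y k - u y) (G k - u y)
          (by simp only [mem_ofPred_eq, inner_sub_left]; linarith [hy.2.2])
          (by simp only [mem_ofPred_eq, inner_sub_left, hGN]; linarith [hy.2.2])
        simpa using this
      have q3 : |Q (p y k) (u y) - Q (G k) (u y)| ≤ 2 * (C / (a / 2) ^ (n + 1) * ‖p y k - G k‖) := by
        have e : Q (p y k) (u y) - Q (G k) (u y) = (K (p y k + u y) - K (G k + u y)) -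
          (K (p y k - u y) - K (G k - u y)) := by simp only [hQ]; ring
        rw [e]
        have := abs_sub (K (p y k + u y) - K (G k + u y)) (K (p y k - u y) - K (G k - u y))
        linarith
      have q4 := hQb (p y k) (u y) k hy.2.1 (hym k).1 (hym k).2 (hyl k)
      have e : F1 y k - F2 y k = (J (z + r y • k) * g (Φ (z + r y • k)) - g x) * Q (p y k) (u y) +
        g x * (Q (p y k) (u y) - Q (G k) (u y)) := by simp only [hF1, hF2]; ring
      rw [e, Real.norm_eq_abs]
      refine (abs_add_le _ _).trans ?_
      rw [abs_mul, abs_mul]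
      gcongr
  rw [integral_zero] at hconv
  have hfin := (hconv.div_const 2).add
    (tendsto_const_nhds (x := (∫ k, (K (G k + N) - K (G k - N)) ∂lam) / 2 * g x))
  rw [zero_div, zero_add] at hfin
  refine hfin.congr' ?_
  filter_upwards [hbasic, hpm, hF1b, hF2b] with y hy hym hb1 hb2
  have hF2i : ∫ k, F2 y k ∂lam = g x * ∫ k, (K (G k + N) - K (G k - N)) ∂lam := by
    simp only [hF2, hQ]
    rw [integral_const_mul]
    congr 1
    obtain ⟨v, hv⟩ := hdec (u y)
    rw [hv]
    exact aux_direction n hE lam K C hKc hhom h0 hd h1 hC G hG N hN hGN v _ (by linarith [hy.2.2])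
  have i1 : Integrable (F1 y) lam :=
    (aux_int n hE lam _).mono' (hF1m y).aestronglyMeasurable (ae_of_all _ hb1)
  have i2 : Integrable (F2 y) lam :=
    (aux_int n hE lam _).mono' (hF2m y).aestronglyMeasurable (ae_of_all _ hb2)
  rw [integral_sub i1 i2, hF2i]
  have hdxy : dist x y = r y := by rw [dist_comm, dist_eq_norm]
  rw [hdxy]
  have hε : 0 < b * r y := mul_pos hb0 hy.1
  have hTi : ∀ y' : V, Integrable (fun w => J w * (if b * r y < dist y' (Φ w) then
      K (y' - Φ w) * g (Φ w) else 0)) lam := by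
    intro y'
    refine (hgi.abs.const_mul (M * (C / (b * r y) ^ n))).mono' ?_ (ae_of_all _ fun w => ?_)
    · apply Measurable.aestronglyMeasurable
      refine hJm.mul (Measurable.ite ?_ ?_ measurable_const)
      · exact measurableSet_lt measurable_const (by fun_prop : Continuous fun w => dist y' (Φ w)).measurable
      · exact (hKm.comp (by fun_prop : Continuous fun w => y' - Φ w).measurable).mul
          (hgc.comp hΦc).measurable
    · rw [Real.norm_eq_abs, abs_mul, mul_assoc]
      gcongr
      · exact hJ w
      · split_ifs with h
        · rw [abs_mul]
          gcongr
          rw [dist_eq_norm] at h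
          refine (h0 _ (norm_pos_iff.1 (hε.trans h))).trans ?_
          gcongr
        · rw [abs_zero]
          have := hε
          positivity
  rw [← integral_sub (hTi y) (hTi _)]
  set H : E → ℝ := fun w => J w * (if b * r y < dist y (Φ w) then K (y - Φ w) * g (Φ w) else 0)
      - J w * (if b * r y < dist ((2:ℝ) • x - y) (Φ w) then
          K ((2:ℝ) • x - y - Φ w) * g (Φ w) else 0) with hH
  have hHF : ∫ w, H w ∂lam = ∫ k, F1 y k ∂lam := by
    have e1 : ∀ k, F1 y k = r y ^ n * (fun w => H (z + w)) (r y • k) := by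
      intro k
      have hyx : y = x + r y • u y := by
        simp only [hu]; rw [smul_smul, mul_inv_cancel₀ hy.1.ne', one_smul]; abel
      have hPx : Φ (z + r y • k) = x + r y • p y k := by
        simp only [hp]; rw [smul_smul, mul_inv_cancel₀ hy.1.ne', one_smul]; abel
      have d1 : y - Φ (z + r y • k) = r y • -(p y k - u y) := by
        rw [hPx]; nth_rewrite 1 [hyx]
        rw [smul_neg, smul_sub]; abel
      have d2 : (2:ℝ) • x - y - Φ (z + r y • k) = r y • -(p y k + u y) := by
        rw [hPx]; nth_rewrite 1 [hyx]
        rw [smul_neg, smul_add, two_smul]; abel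
      simp only [hH, hF1, hQ]
      rw [dist_eq_norm, dist_eq_norm, d1, d2, norm_smul, norm_smul, norm_neg, norm_neg,
        Real.norm_eq_abs, abs_of_pos hy.1, if_pos, if_pos, hhom _ _ hy.1, hhom _ _ hy.1,
        hKodd, hKodd]
      · have : r y ^ n ≠ 0 := (pow_pos hy.1 n).ne'
        field_simp
        ring
      · rw [mul_comm]
        exact mul_lt_mul_of_pos_left ((le_max_left _ _).trans_lt (hym k).1) hy.1
      · rw [mul_comm]
        exact mul_lt_mul_of_pos_left ((le_max_left _ _).trans_lt (hym k).2) hy.1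
    simp only [e1]
    rw [integral_const_mul, Measure.integral_comp_smul_of_nonneg lam (fun w => H (z + w)) (r y)
      (hR := hy.1.le), hE, smul_eq_mul, ← mul_assoc, mul_inv_cancel₀ (pow_pos hy.1 n).ne', one_mul,
      integral_add_left_eq_self]
  rw [hHF]
  ring

end aux

lemma graph_norm_sq {n : ℕ} (A : EuclideanSpace ℝ (Fin n) → ℝ) (p q : EuclideanSpace ℝ (Fin n)) :
    ‖graphMap A p - graphMap A q‖ ^ 2 = ‖p - q‖ ^ 2 + (A p - A q) ^ 2 := by
  rw [EuclideanSpace.norm_sq_eq, EuclideanSpace.norm_sq_eq, Fin.sum_univ_castSucc]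
  simp [graphMap]

lemma graph_lower {n : ℕ} (A : EuclideanSpace ℝ (Fin n) → ℝ) (p q : EuclideanSpace ℝ (Fin n)) :
    ‖p - q‖ ≤ ‖graphMap A p - graphMap A q‖ := by
  have := graph_norm_sq A p q
  apply le_of_sq_le_sq _ (norm_nonneg _)
  nlinarith [sq_nonneg (A p - A q)]

lemma graph_upper {n : ℕ} (A : EuclideanSpace ℝ (Fin n) → ℝ) (hA : ContDiff ℝ 1 A)
    (hslope : ∀ z, ‖gradient A z‖ ≤ 1 / 10) (p q : EuclideanSpace ℝ (Fin n)) :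
    ‖graphMap A p - graphMap A q‖ ≤ 2 * ‖p - q‖ := by
  have h1 : ‖A p - A q‖ ≤ 1 / 10 * ‖p - q‖ := by
    apply Convex.norm_image_sub_le_of_norm_fderiv_le (𝕜 := ℝ) (s := univ)
      (fun x _ => hA.differentiable (by norm_num) x) _ convex_univ (mem_univ _) (mem_univ _)
    intro x _
    have := hslope x
    rwa [gradient, LinearIsometryEquiv.norm_map] at this
  have := graph_norm_sq A p q
  apply le_of_sq_le_sq _ (by positivity)
  rw [this]
  have h2 : (A p - A q) ^ 2 ≤ (1 / 10 * ‖p - q‖) ^ 2 := by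
    rw [← sq_abs]
    exact pow_le_pow_left₀ (abs_nonneg _) h1 2
  nlinarith [norm_nonneg (p - q)]

lemma graph_contDiff {n : ℕ} (A : EuclideanSpace ℝ (Fin n) → ℝ) (hA : ContDiff ℝ 1 A) :
    ContDiff ℝ 1 (graphMap A) := by
  rw [contDiff_euclidean]
  intro i
  refine Fin.lastCases ?_ (fun i => ?_) i
  · simpa [graphMap] using hA
  · simp only [graphMap, Fin.snoc_castSucc]
    exact (EuclideanSpace.proj (𝕜 := ℝ) i).contDiff

lemma graph_haar {n : ℕ} (G : EuclideanSpace ℝ (Fin n) →L[ℝ] EuclideanSpace ℝ (Fin (n + 1)))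
    (hG : ∀ k, ‖k‖ ≤ ‖G k‖) (hGe : MeasurableEmbedding G) :
    (Measure.comap G μH[n]).IsAddHaarMeasure := by
  have hEq : (μH[n] : Measure (EuclideanSpace ℝ (Fin n))).IsAddHaarMeasure := by
    have := isAddHaarMeasure_hausdorffMeasure (E := EuclideanSpace ℝ (Fin n))
    simpa using this
  have hup : ∀ S, Measure.comap G μH[n] S ≤ (‖G‖₊ : ℝ≥0∞) ^ (n:ℝ) * μH[n] S := fun S => by
    rw [hGe.comap_apply]
    have := aux_haus G id S ‖G‖₊ n (by positivity) (fun p _ q _ => by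
      rw [dist_eq_norm, dist_eq_norm, ← map_sub]; exact G.le_opNorm _)
    simpa using this
  have hlo : ∀ S, μH[n] S ≤ Measure.comap G μH[n] S := fun S => by
    rw [hGe.comap_apply]
    have := aux_haus id G S 1 n (by positivity) (fun p _ q _ => by
      rw [dist_eq_norm, dist_eq_norm, ← map_sub, NNReal.coe_one, one_mul]; exact hG _)
    simpa using this
  refine { lt_top_of_isCompact := ?_, map_add_left_eq_self := ?_, open_pos := ?_ }
  · intro K hK
    refine (hup K).trans_lt (ENNReal.mul_lt_top ?_ hK.measure_lt_top)
    exact ENNReal.rpow_lt_top_of_nonneg (by positivity) ENNReal.coe_ne_top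
  · intro v
    ext S hS
    rw [Measure.map_apply (measurable_const_add v) hS, hGe.comap_apply, hGe.comap_apply]
    have : G '' ((fun x => v + x) ⁻¹' S) = (fun x => G v + x) ⁻¹' (G '' S) := by
      ext y
      constructor
      · rintro ⟨k, hk, rfl⟩
        exact ⟨v + k, hk, map_add _ _ _⟩
      · rintro ⟨k, hk, hky⟩
        refine ⟨k - v, by simpa using hk, ?_⟩
        rw [map_sub, hky]
        simp
    rw [this, measure_preimage_add]
  · intro U hU hne h0
    exact hU.measure_ne_zero μH[n] hne (le_antisymm ((hlo U).trans h0.le) zero_le)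

theorem graph_nontangential_half_difference
    (n : ℕ) (hn : 1 ≤ n)
    (K Ω : EuclideanSpace ℝ (Fin (n + 1)) → ℝ) (C : ℝ)
    (hΩhom : ∀ x : EuclideanSpace ℝ (Fin (n + 1)), x ≠ 0 → ∀ t : ℝ, 0 < t → Ω (t • x) = Ω x)
    (hKform : ∀ x : EuclideanSpace ℝ (Fin (n + 1)), x ≠ 0 → K x = Ω x / ‖x‖ ^ n)
    (hKodd : ∀ x : EuclideanSpace ℝ (Fin (n + 1)), K (-x) = -K x)
    (hKsmooth : ContDiffOn ℝ 2 K {(0 : EuclideanSpace ℝ (Fin (n + 1)))}ᶜ)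
    (hKbound : ∀ j ≤ 2, ∀ x : EuclideanSpace ℝ (Fin (n + 1)), x ≠ 0 →
      ‖iteratedFDerivWithin ℝ j K {(0 : EuclideanSpace ℝ (Fin (n + 1)))}ᶜ x‖ ≤ C / ‖x‖ ^ (n + j))
    (A : EuclideanSpace ℝ (Fin n) → ℝ) (hA : ContDiff ℝ 1 A)
    (hslope : ∀ z, ‖gradient A z‖ ≤ 1 / 10)
    (Γ : Set (EuclideanSpace ℝ (Fin (n + 1)))) (hΓ : Γ = Set.range (graphMap A))
    (μ : Measure (EuclideanSpace ℝ (Fin (n + 1)))) (hμ : μ = μH[n].restrict Γ)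
    (N : EuclideanSpace ℝ (Fin n) → EuclideanSpace ℝ (Fin (n + 1)))
    (hN : ∀ z, ‖N z‖ = 1 ∧
      ∀ v : EuclideanSpace ℝ (Fin n), ⟪fderiv ℝ (graphMap A) z v, N z⟫ = 0)
    (g : EuclideanSpace ℝ (Fin (n + 1)) → ℝ) (hg : ContDiff ℝ 1 g)
    (hgc : HasCompactSupport g)
    (a b : ℝ) (ha : a ∈ Set.Ioo (0 : ℝ) 1) (hb : b ∈ Set.Ioo 0 a)
    (z : EuclideanSpace ℝ (Fin n)) (x : EuclideanSpace ℝ (Fin (n + 1)))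
    (hx : x = graphMap A z)
 :
    Tendsto (fun y =>
        (TepsDen K μ g (b * dist x y) y - TepsDen K μ g (b * dist x y) ((2 : ℝ) • x - y)) / 2)
      (𝓝[cone a x (N z)] x) (𝓝 (CK n Ω (N z) * g x)) := by
  have hz0 : N z ≠ 0 := norm_ne_zero_iff.1 (by rw [(hN z).1]; exact one_ne_zero)
  have hopen : IsOpen ({(0 : EuclideanSpace ℝ (Fin (n + 1)))}ᶜ : Set _) := isOpen_compl_singleton
  have h0 : ∀ x : EuclideanSpace ℝ (Fin (n + 1)), x ≠ 0 → |K x| ≤ C / ‖x‖ ^ n := fun x hx => by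
    have := hKbound 0 (by norm_num) x hx
    rwa [norm_iteratedFDerivWithin_zero, Real.norm_eq_abs, add_zero] at this
  have hC : 0 ≤ C := by
    have := (abs_nonneg _).trans (h0 _ hz0)
    rwa [(hN z).1, one_pow, div_one] at this
  have hd : ∀ x : EuclideanSpace ℝ (Fin (n + 1)), x ≠ 0 → DifferentiableAt ℝ K x := fun x hx =>
    (hKsmooth.differentiableOn (by norm_num)).differentiableAt (hopen.mem_nhds hx)
  have h1 : ∀ x : EuclideanSpace ℝ (Fin (n + 1)), x ≠ 0 →
      ‖fderiv ℝ K x‖ ≤ C / ‖x‖ ^ (n + 1) := fun x hx => by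
    have := hKbound 1 (by norm_num) x hx
    rwa [norm_iteratedFDerivWithin_one _ (hopen.uniqueDiffWithinAt hx),
      fderivWithin_of_isOpen hopen hx] at this
  have hKc : ∀ x : EuclideanSpace ℝ (Fin (n + 1)), x ≠ 0 → ContinuousAt K x :=
    fun x hx => (hd x hx).continuousAt
  have hKm : Measurable K := measurable_of_continuousOn_compl_singleton 0 hKsmooth.continuousOn
  have hK0 : K 0 = 0 := by
    have := hKodd 0
    rw [neg_zero] at this
    linarith
  have hhom : ∀ (x : EuclideanSpace ℝ (Fin (n + 1))) (t : ℝ), 0 < t →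
      K (t • x) = (t ^ n)⁻¹ * K x := fun x t ht => by
    by_cases hx : x = 0
    · rw [hx, smul_zero, hK0, mul_zero]
    · rw [hKform x hx, hKform _ (smul_ne_zero ht.ne' hx), hΩhom x hx t ht, norm_smul,
        Real.norm_eq_abs, abs_of_pos ht, mul_pow]
      have : ‖x‖ ≠ 0 := norm_ne_zero_iff.2 hx
      field_simp
  have hE : Module.finrank ℝ (EuclideanSpace ℝ (Fin n)) = n := by simp
  set Φ := graphMap A with hΦ
  set G := fderiv ℝ Φ z with hGdef
  have hΦC : ContDiff ℝ 1 Φ := graph_contDiff A hA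
  have hΦl : ∀ p q, ‖p - q‖ ≤ ‖Φ p - Φ q‖ := graph_lower A
  have hΦu : ∀ p q, ‖Φ p - Φ q‖ ≤ 2 * ‖p - q‖ := graph_upper A hA hslope
  have hΦs : HasStrictFDerivAt Φ G z := hΦC.contDiffAt.hasStrictFDerivAt (by norm_num)
  have hΦd : HasFDerivAt Φ G z := hΦs.hasFDerivAt
  have hG : ∀ k, ‖k‖ ≤ ‖G k‖ := fun k => by
    have h' := hasDerivAt_iff_tendsto_slope_zero.1 (hΦd.hasLineDerivAt k)
    simp only [zero_add, zero_smul, add_zero] at h'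
    refine ge_of_tendsto h'.norm ?_
    filter_upwards [self_mem_nhdsWithin] with t ht
    have ht' : 0 < |t| := abs_pos.2 ht
    have := hΦl (z + t • k) z
    rw [add_sub_cancel_left, norm_smul, Real.norm_eq_abs] at this
    rw [norm_smul, norm_inv, Real.norm_eq_abs, ← div_eq_inv_mul, le_div_iff₀ ht', mul_comm]
    exact this
  have hGinj : Function.Injective G := by
    rw [injective_iff_map_eq_zero]
    intro k hk
    have := hG k
    rw [hk, norm_zero] at this
    exact norm_le_zero_iff.1 this
  have hGcl : Topology.IsClosedEmbedding G :=
    LinearMap.isClosedEmbedding_of_injective (f := (G : EuclideanSpace ℝ (Fin n) →ₗ[ℝ] _))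
      (LinearMap.ker_eq_bot.2 (by exact hGinj))
  have hGe : MeasurableEmbedding G := hGcl.measurableEmbedding
  have hΦcl : Topology.IsClosedEmbedding Φ := by
    have hanti : AntilipschitzWith 1 Φ := AntilipschitzWith.of_le_mul_dist fun p q => by
      rw [dist_eq_norm, dist_eq_norm, NNReal.coe_one, one_mul]; exact hΦl p q
    have hlip : LipschitzWith 2 Φ := LipschitzWith.of_dist_le_mul fun p q => by
      rw [dist_eq_norm, dist_eq_norm]; exact hΦu p q
    exact hanti.isClosedEmbedding hlip.uniformContinuous
  have hΦe : MeasurableEmbedding Φ := hΦcl.measurableEmbedding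
  have hGN : ∀ k, ⟪G k, N z⟫ = 0 := (hN z).2
  -- range of G
  have hrange : LinearMap.range (G : EuclideanSpace ℝ (Fin n) →ₗ[ℝ] EuclideanSpace ℝ (Fin (n + 1)))
      = (ℝ ∙ N z)ᗮ := by
    apply Submodule.eq_of_le_of_finrank_eq
    · rintro _ ⟨k, rfl⟩
      rw [Submodule.mem_orthogonal_singleton_iff_inner_left]
      exact hGN k
    · rw [LinearMap.finrank_range_of_inj hGinj, hE]
      have : Fact (Module.finrank ℝ (EuclideanSpace ℝ (Fin (n + 1))) = n + 1) := ⟨by simp⟩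
      exact (Submodule.finrank_orthogonal_span_singleton hz0).symm
  have hmem : ∀ y : EuclideanSpace ℝ (Fin (n + 1)), ⟪y, N z⟫ = 0 → ∃ k, G k = y := fun y hy => by
    have : y ∈ (ℝ ∙ N z)ᗮ := Submodule.mem_orthogonal_singleton_iff_inner_left.2 hy
    rw [← hrange] at this
    exact this
  have hdec : ∀ u : EuclideanSpace ℝ (Fin (n + 1)), ∃ v, u = G v + ⟪u, N z⟫ • N z := fun u => by
    obtain ⟨v, hv⟩ := hmem (u - ⟪u, N z⟫ • N z) (by
      rw [inner_sub_left, inner_smul_left, real_inner_self_eq_norm_sq, (hN z).1]; simp)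
    exact ⟨v, by rw [hv]; abel⟩
  set lam : Measure (EuclideanSpace ℝ (Fin n)) := Measure.comap G μH[n] with hlam
  have hHaar : lam.IsAddHaarMeasure := graph_haar G hG hGe
  set nu : Measure (EuclideanSpace ℝ (Fin n)) := Measure.comap Φ μH[n] with hnu
  have hn0 : (0:ℝ) ≤ n := by positivity
  obtain ⟨J, hJm, hJb, hJ1, hJnu⟩ := aux_density lam nu (2 ^ n) z (fun S _ => by
      rw [hlam, hnu, hΦe.comap_apply, hGe.comap_apply]
      have := aux_haus Φ G S 2 n hn0 (fun p _ q _ => by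
        rw [dist_eq_norm, dist_eq_norm, ← map_sub]
        refine (hΦu p q).trans ?_
        have := hG (p - q)
        push_cast
        linarith)
      rw [ENNReal.rpow_natCast] at this
      simpa using this) (fun ε hε => by
      have hη : ∃ η : ℝ≥0, 0 < η ∧ (1 + η) ^ n ≤ 1 + ε := by
        have hcont : Tendsto (fun η : ℝ≥0 => (1 + η) ^ n) (𝓝[>] 0) (𝓝 1) := by
          have : Continuous (fun η : ℝ≥0 => (1 + η) ^ n) := by fun_prop
          have := this.tendsto 0
          simp only [add_zero, one_pow] at this
          exact this.mono_left nhdsWithin_le_nhds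
        have e1 := hcont.eventually (gt_mem_nhds (show (1:ℝ≥0) < 1 + ε from lt_add_of_pos_right _ hε))
        obtain ⟨η, h2, h3⟩ := (e1.and self_mem_nhdsWithin).exists
        exact ⟨η, h3, h2.le⟩
      obtain ⟨η, hη0, hη⟩ := hη
      have hη' : ((1 + η : ℝ≥0) : ℝ≥0∞) ^ (n:ℝ) ≤ 1 + ε := by
        rw [ENNReal.rpow_natCast]; exact_mod_cast hη
      have hs := hΦs.isLittleO.def (c := η) (by exact_mod_cast hη0)
      rw [Metric.eventually_nhds_iff] at hs
      obtain ⟨δ, hδ, hs⟩ := hs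
      refine ⟨δ, hδ, fun S _ hSδ => ?_⟩
      have hs' : ∀ p ∈ S, ∀ q ∈ S, ‖Φ p - Φ q - G (p - q)‖ ≤ η * ‖p - q‖ := fun p hp q hq =>
        hs (y := (p, q)) (by
          rw [Prod.dist_eq]; exact max_lt (hSδ hp) (hSδ hq))
      rw [hlam, hnu, hΦe.comap_apply, hGe.comap_apply]
      constructor
      · refine (aux_haus Φ G S (1 + η) n hn0 (fun p hp q hq => ?_)).trans (by gcongr)
        rw [dist_eq_norm, dist_eq_norm, ← map_sub]
        have e1 := hs' p hp q hq
        have e2 := norm_add_le (Φ p - Φ q - G (p - q)) (G (p - q))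
        rw [sub_add_cancel] at e2
        have e3 : (η:ℝ) * ‖p - q‖ ≤ η * ‖G (p - q)‖ := by gcongr; exact hG _
        push_cast
        linarith
      · refine (aux_haus G Φ S (1 + η) n hn0 (fun p hp q hq => ?_)).trans (by gcongr)
        rw [dist_eq_norm, dist_eq_norm, ← map_sub]
        have e1 := hs' p hp q hq
        have e2 := norm_sub_le (Φ p - Φ q) (Φ p - Φ q - G (p - q))
        rw [sub_sub_cancel] at e2
        have e3 : (η:ℝ) * ‖p - q‖ ≤ η * ‖Φ p - Φ q‖ := by gcongr; exact hΦl _ _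
        push_cast
        linarith)
  have hμ' : μ = Measure.map Φ nu := by
    rw [hμ, hΓ, hnu, hΦe.map_comap]
  have hT : ∀ ε y, TepsDen K μ g ε y =
      ∫ w, (J w : ℝ) * (if ε < dist y (Φ w) then K (y - Φ w) * g (Φ w) else 0) ∂lam := by
    intro ε y
    rw [TepsDen, hμ', hΦe.integral_map, hJnu, integral_withDensity_eq_integral_smul hJm]
    rfl
  have hCK : CK n Ω (N z) = (∫ k, (K (G k + N z) - K (G k - N z)) ∂lam) / 2 := by
    have hset : {y : EuclideanSpace ℝ (Fin (n + 1)) | ⟪y, N z⟫ = 0} = Set.range G := by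
      ext y
      constructor
      · intro hy; exact hmem y hy
      · rintro ⟨k, rfl⟩; exact hGN k
    rw [CK, hset, ← hGe.map_comap, hGe.integral_map, ← integral_div]
    congr 1
    ext k
    have e1 : ‖G k + N z‖ ^ 2 = ‖G k‖ ^ 2 + 1 := by
      rw [norm_add_sq_real, hGN, (hN z).1]; ring
    have e2 : ‖G k - N z‖ ^ 2 = ‖G k‖ ^ 2 + 1 := by
      rw [norm_sub_sq_real, hGN, (hN z).1]; ring
    have n1 : G k + N z ≠ 0 := by
      intro h; rw [h, norm_zero] at e1; nlinarith [sq_nonneg ‖G k‖]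
    have n2 : G k - N z ≠ 0 := by
      intro h; rw [h, norm_zero] at e2; nlinarith [sq_nonneg ‖G k‖]
    have hpow : ∀ s : ℝ, 0 ≤ s → (s ^ 2) ^ ((n:ℝ) / 2) = s ^ n := fun s hs => by
      rw [← Real.rpow_natCast s 2, ← Real.rpow_mul hs, ← Real.rpow_natCast]
      congr 1
      push_cast
      ring
    have f1 : ‖G k + N z‖ ^ n = (‖G k‖ ^ 2 + 1) ^ ((n:ℝ) / 2) := by
      rw [← e1, hpow _ (norm_nonneg _)]
    have f2 : ‖G k - N z‖ ^ n = (‖G k‖ ^ 2 + 1) ^ ((n:ℝ) / 2) := by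
      rw [← e2, hpow _ (norm_nonneg _)]
    rw [hKform _ n1, hKform _ n2, f1, f2]
    ring
  obtain ⟨B, hB⟩ := hgc.exists_bound_of_continuous hg.continuous
  have hgi : Integrable (fun w => g (Φ w)) lam :=
    (hg.continuous.comp hΦC.continuous).integrable_of_hasCompactSupport
      (hgc.comp_isClosedEmbedding hΦcl)
  have := aux_main n hE lam K C hKm hKodd hKc hhom h0 hd h1 hC G hG (N z) (hN z).1 hGN hdec Φ
    hΦC.continuous z hΦd hΦl (fun w => (J w : ℝ)) hJm.coe_nnreal_real (2 ^ n + 1)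
    (fun w => by
      rw [abs_of_nonneg (NNReal.coe_nonneg (J w))]
      exact_mod_cast hJb w)
    (by
      have := (NNReal.continuous_coe.tendsto 1).comp hJ1
      rw [NNReal.coe_one] at this
      exact this)
    g hg.continuous B (fun w => hB w) hgi a b ha hb x hx
  simp only [hT, hCK]
  exact this
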